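/- Let 𝒜 and ℬ be NMAD-families on ℕ and let f : ℕ → ℕ be a surjection. Then f[S_ℬ] = S_𝒜 if and only if both of the following hold: (a) f⁻¹(I) ∈ I(ℬ) for every I ∈ I(𝒜); and (b) for every infinite M ⊆ ℕ with M ∩ A finite for every A ∈ 𝒜, there is an infinite R ⊆ ℕ with R ∩ B finite for every B ∈ ℬ such that f⁻¹(M) ∩ R is infinite. -/

import Mathlib

/-!
Let `𝒜^⊥` consist of the sets almost disjoint from every member of `𝒜`. An AD-family `𝒜` is nowhere
MAD precisely when `𝒜^⊥⊥ = I(𝒜)`. In terms of ideals, `f[S_ℬ] = S_𝒜` says that `f⁻¹` both preserves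
and reflects membership in the ideals. Preservation is (a). Since every `I(𝒜)`-positive set contains
an infinite member of `𝒜^⊥`, reflection only has to be tested on infinite `M ∈ 𝒜^⊥`, where
`f⁻¹(M) ∉ I(ℬ) = ℬ^⊥⊥` is (b).
-/

open Set

/-- `f[G] = {A : f⁻¹(A) ∈ G}`, the image (Rudin–Keisler) filter of a family of sets. -/
def mapFilter {α β : Type*} (f : α → β) (G : Set (Set α)) : Set (Set β) := {A | f ⁻¹' A ∈ G}

/-- `F` is a (proper) filter of subsets. -/
def IsFilterFam {α : Type*} (F : Set (Set α)) : Prop :=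
  Set.univ ∈ F ∧ (∀ A ∈ F, ∀ B : Set α, A ⊆ B → B ∈ F) ∧ (∀ A ∈ F, ∀ B ∈ F, A ∩ B ∈ F)

/-- A free filter: a proper filter containing all cofinite sets. -/
def IsFreeFilter {α : Type*} (F : Set (Set α)) : Prop :=
  IsFilterFam F ∧ (∀ A : Set α, Aᶜ.Finite → A ∈ F) ∧ ∅ ∉ F

/-- `S → F` : `S` is an infinite set converging to the filter `F`, i.e. `S ⊆* A` for all `A ∈ F`. -/
def ConvTo {α : Type*} (S : Set α) (F : Set (Set α)) : Prop :=
  S.Infinite ∧ ∀ A ∈ F, (S \ A).Finite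

/-- `F` is relatively equivalent to the Fréchet filter: some `A ∈ F` converges to `F`. -/
def RelFrechet {α : Type*} (F : Set (Set α)) : Prop := ∃ A ∈ F, ConvTo A F

/-- Rudin–Keisler order: `F ≤_RK G` iff `f[G] = F` for some surjection `f`. -/
def RKle {α : Type*} (F G : Set (Set α)) : Prop :=
  ∃ f : α → α, Function.Surjective f ∧ mapFilter f G = F

/-- `F ≈ G` : there is a bijection `f` with `f[F] = G`. -/
def EquivFilter {α : Type*} (F G : Set (Set α)) : Prop :=
  ∃ f : α → α, Function.Bijective f ∧ mapFilter f F = G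

/-- `F <_RK G` : `F ≤_RK G` and `¬ (F ≈ G)`. -/
def RKlt {α : Type*} (F G : Set (Set α)) : Prop := RKle F G ∧ ¬ EquivFilter F G

/-- An AD-family: an infinite family of infinite sets with pairwise finite intersections. -/
def IsADFamily {α : Type*} (𝒜 : Set (Set α)) : Prop :=
  𝒜.Infinite ∧ (∀ A ∈ 𝒜, A.Infinite) ∧ ∀ A ∈ 𝒜, ∀ B ∈ 𝒜, A ≠ B → (A ∩ B).Finite

/-- The ideal generated by a family `𝒜`: sets almost covered by finitely many members of `𝒜`. -/
def idealGen {α : Type*} (𝒜 : Set (Set α)) : Set (Set α) :=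
  {X | ∃ 𝒜' : Finset (Set α), ↑𝒜' ⊆ 𝒜 ∧ (X \ ⋃₀ ↑𝒜').Finite}

/-- `S_𝒜`: the filter dual to the ideal generated by `𝒜`. -/
def SFam {α : Type*} (𝒜 : Set (Set α)) : Set (Set α) := {F | Fᶜ ∈ idealGen 𝒜}

/-- `F_𝒟 = {F : D ⊆* F for every D ∈ 𝒟}`. -/
def FFam {α : Type*} (𝒟 : Set (Set α)) : Set (Set α) := {F | ∀ D ∈ 𝒟, (D \ F).Finite}

/-- A nowhere MAD family: every set outside the generated ideal contains an infinite set
almost disjoint from every member of `𝒜`. -/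
def IsNMAD {α : Type*} (𝒜 : Set (Set α)) : Prop :=
  IsADFamily 𝒜 ∧ ∀ X : Set α, X ∉ idealGen 𝒜 →
    ∃ B ⊆ X, B.Infinite ∧ ∀ A ∈ 𝒜, (B ∩ A).Finite

/-- A partition of `ℕ` into infinitely many infinite sets. -/
def IsInfPartition (𝒬 : Set (Set ℕ)) : Prop :=
  𝒬.Infinite ∧ (∀ P ∈ 𝒬, P.Infinite) ∧ ⋃₀ 𝒬 = Set.univ ∧
    ∀ P ∈ 𝒬, ∀ Q ∈ 𝒬, P ≠ Q → P ∩ Q = ∅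

/-- `F` is a Fréchet–Urysohn filter: every `F`-positive set contains a sequence converging to `F`. -/
def IsFUFilter {α : Type*} (F : Set (Set α)) : Prop :=
  ∀ A : Set α, Aᶜ ∉ F → ∃ S ⊆ A, ConvTo S F

/-- The trace filter `F|_A = {G ∩ A : G ∈ F}`. -/
def traceFam {α : Type*} (F : Set (Set α)) (A : Set α) : Set (Set α) := {S | ∃ G ∈ F, S = G ∩ A}

/-- Todorčević–Uzcátegui order: there are `A ∈ G⁺`, `B ∈ F` and a bijection `f : A → B`
with `f[G|_A] = F|_B`. -/
def TUle {α : Type*} (F G : Set (Set α)) : Prop :=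
  ∃ A : Set α, Aᶜ ∉ G ∧ ∃ B ∈ F, ∃ f : α → α, Set.BijOn f A B ∧
    {Y : Set α | Y ⊆ B ∧ A ∩ f ⁻¹' Y ∈ traceFam G A} = traceFam F B

/-- The orthogonal `𝒜^⊥`: the sets, finite ones included, almost disjoint from every member of
`𝒜`. It turns the nowhere MAD property into the identity `𝒜^⊥⊥ = I(𝒜)`. -/
def orthogonal {α : Type*} (𝒜 : Set (Set α)) : Set (Set α) := {R | ∀ A ∈ 𝒜, (R ∩ A).Finite}

section

variable {α β : Type*} {𝒜 : Set (Set β)} {ℬ : Set (Set α)} {X Y R : Set β}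

theorem mem_orthogonal_of_subset (hY : Y ∈ orthogonal 𝒜) (hXY : X ⊆ Y) : X ∈ orthogonal 𝒜 :=
  fun A hA => (hY A hA).subset (inter_subset_inter_left A hXY)

theorem mem_idealGen_of_subset (hY : Y ∈ idealGen 𝒜) (hXY : X ⊆ Y) : X ∈ idealGen 𝒜 :=
  let ⟨𝒞, h𝒞, hfin⟩ := hY
  ⟨𝒞, h𝒞, hfin.subset (sdiff_subset_sdiff_left hXY)⟩

theorem inter_sUnion_finite_of_mem_orthogonal (hR : R ∈ orthogonal 𝒜) {𝒞 : Finset (Set β)}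
    (h𝒞 : ↑𝒞 ⊆ 𝒜) : (R ∩ ⋃₀ ↑𝒞).Finite := by
  rw [sUnion_eq_biUnion, inter_iUnion₂]
  exact 𝒞.finite_toSet.biUnion fun A hA => hR A (h𝒞 hA)

theorem idealGen_subset_orthogonal_orthogonal :
    idealGen 𝒜 ⊆ orthogonal (orthogonal 𝒜) := by
  rintro X ⟨𝒞, h𝒞, hfin⟩ R hR
  refine (hfin.union (inter_sUnion_finite_of_mem_orthogonal hR h𝒞)).subset ?_
  rintro x ⟨hxX, hxR⟩
  by_cases hx : x ∈ ⋃₀ (𝒞 : Set (Set β))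
  · exact Or.inr ⟨hxR, hx⟩
  · exact Or.inl ⟨hxX, hx⟩

theorem finite_of_mem_idealGen_of_mem_orthogonal (hI : X ∈ idealGen 𝒜)
    (hO : X ∈ orthogonal 𝒜) : X.Finite := by
  simpa only [inter_self] using idealGen_subset_orthogonal_orthogonal hI X hO

theorem IsNMAD.orthogonal_orthogonal_subset (h𝒜 : IsNMAD 𝒜) :
    orthogonal (orthogonal 𝒜) ⊆ idealGen 𝒜 := by
  intro X hX
  by_contra hXI
  obtain ⟨R, hRX, hRinf, hR⟩ := h𝒜.2 X hXI
  have hXR : (X ∩ R).Finite := hX R hR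
  exact hRinf (by rwa [inter_eq_right.2 hRX] at hXR)

theorem notMem_idealGen_iff_exists_orthogonal (h𝒜 : orthogonal (orthogonal 𝒜) ⊆ idealGen 𝒜) :
    X ∉ idealGen 𝒜 ↔ ∃ R : Set β, R.Infinite ∧ R ∈ orthogonal 𝒜 ∧ (X ∩ R).Infinite := by
  constructor
  · intro hX
    have hXO : ¬∀ R ∈ orthogonal 𝒜, (X ∩ R).Finite := fun h => hX (h𝒜 h)
    push Not at hXO
    obtain ⟨R, hR, hXR⟩ := hXO
    exact ⟨R, hXR.mono inter_subset_right, hR, hXR⟩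
  · rintro ⟨R, -, hR, hXR⟩ hX
    exact hXR (idealGen_subset_orthogonal_orthogonal hX R hR)

theorem mapFilter_SFam_eq_SFam_iff {f : α → β} :
    mapFilter f (SFam ℬ) = SFam 𝒜 ↔
      (∀ X ∈ idealGen 𝒜, f ⁻¹' X ∈ idealGen ℬ) ∧
        ∀ X, f ⁻¹' X ∈ idealGen ℬ → X ∈ idealGen 𝒜 := by
  have mem_iff (X : Set β) :
      (Xᶜ ∈ mapFilter f (SFam ℬ) ↔ Xᶜ ∈ SFam 𝒜) ↔
        (f ⁻¹' X ∈ idealGen ℬ ↔ X ∈ idealGen 𝒜) := by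
    simp only [mapFilter, SFam, mem_ofPred_eq, preimage_compl, compl_compl]
  rw [Set.ext_iff, compl_surjective.forall, forall_congr' mem_iff, ← forall_and]
  exact forall_congr' fun X => Iff.comm.trans iff_iff_implies_and_implies

theorem preimage_reflects_idealGen_iff (h𝒜 : orthogonal (orthogonal 𝒜) ⊆ idealGen 𝒜)
    {f : α → β} :
    (∀ X, f ⁻¹' X ∈ idealGen ℬ → X ∈ idealGen 𝒜) ↔
      ∀ M : Set β, M.Infinite → M ∈ orthogonal 𝒜 → f ⁻¹' M ∉ idealGen ℬ := by
  constructor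
  · intro h M hMinf hMO hM
    exact hMinf (finite_of_mem_idealGen_of_mem_orthogonal (h M hM) hMO)
  · intro h X hX
    by_contra hXI
    obtain ⟨R, -, hR, hXR⟩ := (notMem_idealGen_iff_exists_orthogonal h𝒜).1 hXI
    exact h (X ∩ R) hXR (mem_orthogonal_of_subset hR inter_subset_right)
      (mem_idealGen_of_subset hX (preimage_mono inter_subset_left))

theorem statement2_general (h𝒜 : orthogonal (orthogonal 𝒜) ⊆ idealGen 𝒜)
    (hℬ : orthogonal (orthogonal ℬ) ⊆ idealGen ℬ) (f : α → β) :
    mapFilter f (SFam ℬ) = SFam 𝒜 ↔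
      (∀ I ∈ idealGen 𝒜, f ⁻¹' I ∈ idealGen ℬ) ∧
        ∀ M : Set β, M.Infinite → M ∈ orthogonal 𝒜 →
          ∃ R : Set α, R.Infinite ∧ R ∈ orthogonal ℬ ∧ (f ⁻¹' M ∩ R).Infinite := by
  simp only [mapFilter_SFam_eq_SFam_iff, preimage_reflects_idealGen_iff h𝒜,
    notMem_idealGen_iff_exists_orthogonal hℬ]

end

/-- Combinatorial characterization of `f[S_ℬ] = S_𝒜` for NMAD families. -/
theorem statement2 (𝒜 ℬ : Set (Set ℕ)) (h𝒜 : IsNMAD 𝒜) (hℬ : IsNMAD ℬ)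
    (f : ℕ → ℕ) (hf : Function.Surjective f) :
    mapFilter f (SFam ℬ) = SFam 𝒜 ↔
      ((∀ I ∈ idealGen 𝒜, f ⁻¹' I ∈ idealGen ℬ) ∧
        ∀ M : Set ℕ, M.Infinite → (∀ A ∈ 𝒜, (M ∩ A).Finite) →
          ∃ R : Set ℕ, R.Infinite ∧ (∀ B ∈ ℬ, (R ∩ B).Finite) ∧
            (f ⁻¹' M ∩ R).Infinite) :=
  statement2_general h𝒜.orthogonal_orthogonal_subset hℬ.orthogonal_orthogonal_subset f
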